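/- Let 0 < r1 ≤ r2 ≤ r3, let n be an integer with 2 ≤ n ≤ 4, let c > 0, and let Ω be an isoperimetric region in T^3 × R^n with 0 < η_m < c. Then I_{S^1_{r1}×S^1_{r2}×R^{n+1}}(V^{n+3}(Ω)) − 2c < V^{n+2}(∂Ω). -/

import Mathlib

open MeasureTheory Real ENNReal NNReal

noncomputable section

/-- The flat circle of radius `r` (circumference `2πr`), i.e. `ℝ / (2πr)ℤ`
with the quotient (arc-length) metric. -/
abbrev Circ (r : ℝ) : Type := AddCircle (2 * Real.pi * r)

/-- `d`-dimensional Hausdorff (Riemannian) measure of a subset of a metric space. -/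
noncomputable def haus (X : Type*) [EMetricSpace X] (d : ℕ) (s : Set X) : ℝ≥0∞ :=
  letI : MeasurableSpace X := borel X
  haveI : BorelSpace X := ⟨rfl⟩
  (MeasureTheory.Measure.hausdorffMeasure (d : ℝ) : Measure X) s

/-- A closed region is the closure of an open set. -/
def IsClosedRegion {X : Type*} [TopologicalSpace X] (U : Set X) : Prop :=
  ∃ V : Set X, IsOpen V ∧ U = closure V

/-- The isoperimetric profile of an `m`-dimensional space `X`:
the infimum of the `(m-1)`-dimensional boundary measures of closed regions
of `m`-dimensional measure `v`. -/
noncomputable def isoProfile (X : Type*) [EMetricSpace X] (m : ℕ) (v : ℝ≥0∞) : ℝ≥0∞ :=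
  ⨅ (U : Set X) (_ : IsClosedRegion U ∧ haus X m U = v), haus X (m - 1) (frontier U)

/-- An isoperimetric region in the `m`-dimensional space `X`. -/
def IsIsoRegion (X : Type*) [EMetricSpace X] (m : ℕ) (Ω : Set X) : Prop :=
  IsClosedRegion Ω ∧ haus X (m - 1) (frontier Ω) = isoProfile X m (haus X m Ω)

/-- Euclidean `n`-space. -/
abbrev EucSp (n : ℕ) : Type := EuclideanSpace ℝ (Fin n)

/-- The Riemannian product `S¹_r × ℝ^m` (with the `ℓ²` product metric). -/
abbrev S1R (r : ℝ) (m : ℕ) : Type := WithLp 2 (Circ r × EucSp m)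

/-- The Riemannian product `S¹_{r1} × S¹_{r2} × ℝ^n = T² × ℝ^n`. -/
abbrev T2R (r1 r2 : ℝ) (n : ℕ) : Type := WithLp 2 (Circ r1 × S1R r2 n)

/-- first circle coordinate of a point of `T² × ℝ^n` -/
def t2fst {r1 r2 : ℝ} {n : ℕ} (p : T2R r1 r2 n) : Circ r1 :=
  (WithLp.equiv 2 (Circ r1 × S1R r2 n) p).1

/-- second circle coordinate of a point of `T² × ℝ^n` -/
def t2snd {r1 r2 : ℝ} {n : ℕ} (p : T2R r1 r2 n) : Circ r2 :=
  (WithLp.equiv 2 (Circ r2 × EucSp n) ((WithLp.equiv 2 (Circ r1 × S1R r2 n) p).2)).1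

/-- Euclidean coordinate of a point of `T² × ℝ^n` -/
def t2euc {r1 r2 : ℝ} {n : ℕ} (p : T2R r1 r2 n) : EucSp n :=
  (WithLp.equiv 2 (Circ r2 × EucSp n) ((WithLp.equiv 2 (Circ r1 × S1R r2 n) p).2)).2

/-- `ω_n`, the `n`-dimensional volume of the unit round sphere `Sⁿ ⊂ ℝ^{n+1}`. -/
noncomputable def omegaS (n : ℕ) : ℝ :=
  (haus (EucSp (n+1)) n (Metric.sphere (0 : EucSp (n+1)) 1)).toReal

/-- `β_n(r) = n^{(n-1)(n+1)} (2πr ω_{n-1})^{n+1} (1+n)^{-n²} ω_n^{-n}`. -/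
noncomputable def betaC (n : ℕ) (r : ℝ) : ℝ :=
  (n : ℝ) ^ ((n-1)*(n+1)) * (2 * Real.pi * r * omegaS (n-1)) ^ (n+1) *
    ((1 + (n : ℝ)) ^ (n^2))⁻¹ * ((omegaS n) ^ n)⁻¹

/-- The isoperimetric profile of `ℝ^m`: `I_{ℝ^m}(v) = m^{(m-1)/m} ω_{m-1}^{1/m} v^{(m-1)/m}`. -/
noncomputable def eucProfile (m : ℕ) (v : ℝ) : ℝ :=
  (m : ℝ) ^ (((m : ℝ) - 1)/m) * omegaS (m-1) ^ ((1 : ℝ)/m) * v ^ (((m : ℝ) - 1)/m)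

/-- The region `S¹_{r1} × S¹_{r2} × B^n_R` in `T² × ℝ^n`. -/
def tball (r1 r2 : ℝ) (n : ℕ) (R : ℝ) : Set (T2R r1 r2 n) :=
  {p | ‖t2euc p‖ ≤ R}

/-- `f_n(v) = V^{n+1}(∂(S¹_{r1} × S¹_{r2} × B^n_R))`, where `R > 0` is such that
`V^{n+2}(S¹_{r1} × S¹_{r2} × B^n_R) = v`. -/
noncomputable def fA (r1 r2 : ℝ) (n : ℕ) (v : ℝ≥0∞) : ℝ≥0∞ :=
  ⨅ (R : ℝ) (_ : 0 < R ∧ haus (T2R r1 r2 n) (n+2) (tball r1 r2 n R) = v),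
    haus (T2R r1 r2 n) (n+1) (frontier (tball r1 r2 n R))

/-- The slice function `F₁(t) = V^{n+1}(Ω ∩ ({t} × S¹_{r2} × ℝ^n))`. -/
noncomputable def sliceF1 {r1 r2 : ℝ} {n : ℕ} (Ω : Set (T2R r1 r2 n)) (t : Circ r1) : ℝ≥0∞ :=
  haus (T2R r1 r2 n) (n+1) (Ω ∩ {p | t2fst p = t})

/-- The slice function `F₂(s) = V^{n+1}(Ω ∩ (S¹_{r1} × {s} × ℝ^n))`. -/
noncomputable def sliceF2 {r1 r2 : ℝ} {n : ℕ} (Ω : Set (T2R r1 r2 n)) (s : Circ r2) : ℝ≥0∞ :=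
  haus (T2R r1 r2 n) (n+1) (Ω ∩ {p | t2snd p = s})

/-- `θ_m`, the minimum (infimum) of the slice function `F₁`. -/
noncomputable def thetaMin {r1 r2 : ℝ} {n : ℕ} (Ω : Set (T2R r1 r2 n)) : ℝ≥0∞ :=
  ⨅ t : Circ r1, sliceF1 Ω t

/-- `θ_M`, the maximum (supremum) of the slice function `F₁`. -/
noncomputable def thetaMax {r1 r2 : ℝ} {n : ℕ} (Ω : Set (T2R r1 r2 n)) : ℝ≥0∞ :=
  ⨆ t : Circ r1, sliceF1 Ω t

/-- `σ_m`, the minimum (infimum) of the slice function `F₂`. -/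
noncomputable def sigmaMin {r1 r2 : ℝ} {n : ℕ} (Ω : Set (T2R r1 r2 n)) : ℝ≥0∞ :=
  ⨅ s : Circ r2, sliceF2 Ω s

/-- `σ_M`, the maximum (supremum) of the slice function `F₂`. -/
noncomputable def sigmaMax {r1 r2 : ℝ} {n : ℕ} (Ω : Set (T2R r1 r2 n)) : ℝ≥0∞ :=
  ⨆ s : Circ r2, sliceF2 Ω s

/-- The region `S¹_r × B^m_R` in `S¹_r × ℝ^m`. -/
def s1ball (r : ℝ) (m : ℕ) (R : ℝ) : Set (S1R r m) :=
  {p | ‖(WithLp.equiv 2 (Circ r × EucSp m) p).2‖ ≤ R}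
/-- The Riemannian product `S¹_{r1} × S¹_{r2} × S¹_{r3} × ℝ^n = T³ × ℝ^n`. -/
abbrev T3R (r1 r2 r3 : ℝ) (n : ℕ) : Type :=
  WithLp 2 (Circ r1 × WithLp 2 (Circ r2 × S1R r3 n))

/-- third circle coordinate of a point of `T³ × ℝ^n` -/
def t3trd {r1 r2 r3 : ℝ} {n : ℕ} (p : T3R r1 r2 r3 n) : Circ r3 :=
  (WithLp.equiv 2 (Circ r3 × EucSp n)
    ((WithLp.equiv 2 (Circ r2 × S1R r3 n)
      ((WithLp.equiv 2 (Circ r1 × WithLp 2 (Circ r2 × S1R r3 n)) p).2)).2)).1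

/-- Euclidean coordinate of a point of `T³ × ℝ^n` -/
def t3euc {r1 r2 r3 : ℝ} {n : ℕ} (p : T3R r1 r2 r3 n) : EucSp n :=
  (WithLp.equiv 2 (Circ r3 × EucSp n)
    ((WithLp.equiv 2 (Circ r2 × S1R r3 n)
      ((WithLp.equiv 2 (Circ r1 × WithLp 2 (Circ r2 × S1R r3 n)) p).2)).2)).2

/-- The region `T³ × B^n_R` in `T³ × ℝ^n`. -/
def t3ball (r1 r2 r3 : ℝ) (n : ℕ) (R : ℝ) : Set (T3R r1 r2 r3 n) :=
  {p | ‖t3euc p‖ ≤ R}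

/-- `g_n(v) = V^{n+2}(∂(T³ × B^n_R))`, where `R > 0` is such that
`V^{n+3}(T³ × B^n_R) = v`. -/
noncomputable def gA (r1 r2 r3 : ℝ) (n : ℕ) (v : ℝ≥0∞) : ℝ≥0∞ :=
  ⨅ (R : ℝ) (_ : 0 < R ∧ haus (T3R r1 r2 r3 n) (n+3) (t3ball r1 r2 r3 n R) = v),
    haus (T3R r1 r2 r3 n) (n+2) (frontier (t3ball r1 r2 r3 n R))

/-- The slice function `F(t) = V^{n+2}(Ω ∩ (S¹_{r1} × S¹_{r2} × {t} × ℝ^n))`. -/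
noncomputable def sliceF3 {r1 r2 r3 : ℝ} {n : ℕ} (Ω : Set (T3R r1 r2 r3 n))
    (t : Circ r3) : ℝ≥0∞ :=
  haus (T3R r1 r2 r3 n) (n+2) (Ω ∩ {p | t3trd p = t})

/-- `η_m`, the minimum (infimum) of the slice function `F`. -/
noncomputable def etaMin {r1 r2 r3 : ℝ} {n : ℕ} (Ω : Set (T3R r1 r2 r3 n)) : ℝ≥0∞ :=
  ⨅ t : Circ r3, sliceF3 Ω t

/-- `η_M`, the maximum (supremum) of the slice function `F`. -/
noncomputable def etaMax {r1 r2 r3 : ℝ} {n : ℕ} (Ω : Set (T3R r1 r2 r3 n)) : ℝ≥0∞ :=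
  ⨆ t : Circ r3, sliceF3 Ω t

/-!
Since `η_m < c`, some slice of `Ω`, at angle `t` of the third circle, has measure `F(t) < c`. Cut
`Ω` along it and unroll the third circle into an interval of length `2πr₃` of an additional
Euclidean coordinate. Unrolling preserves distances across at most half a turn, so the volume is
unchanged and the boundary gains at most two copies of the slice; hence
`I(V(Ω)) ≤ V(∂Ω) + 2 F(t) < V(∂Ω) + 2 c`.

The strict inequality needs `V(∂Ω) < ∞`. If `V(∂Ω) = ∞`, it says that the profile is finite:
the volumes of the regions `T² × [-R, R]ⁿ⁺¹` vary continuously with `R`, so they attain every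
value strictly between `0` and the total volume, and their boundaries have finite measure.
-/

section HausdorffMeasure

variable {X Y : Type*} [EMetricSpace X] [EMetricSpace Y] [MeasurableSpace X] [BorelSpace X]
  [MeasurableSpace Y] [BorelSpace Y]

theorem haus_eq_hausdorffMeasure (d : ℕ) (s : Set X) : haus X d s = μH[(d : ℝ)] s := by
  borelize X
  rfl

theorem hausdorffMeasure_image_of_edist_eq {f : X → Y} {A : Set X} {d : ℝ} (hd : 0 ≤ d)
    (hf : ∀ x ∈ A, ∀ y ∈ A, edist (f x) (f y) = edist x y) : μH[d] (f '' A) = μH[d] A := by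
  have hfA : Isometry (A.domRestrict f) := fun x y => hf x x.2 y y.2
  have hA : Isometry ((↑) : A → X) := isometry_subtype_coe
  calc μH[d] (f '' A) = μH[d] (A.domRestrict f '' Set.univ) := by
        rw [Set.image_univ, Set.range_domRestrict]
    _ = μH[d] (((↑) : A → X) '' Set.univ) := by
        rw [hfA.hausdorffMeasure_image (.inl hd), hA.hausdorffMeasure_image (.inl hd)]
    _ = μH[d] A := by rw [Set.image_univ, Subtype.range_coe]

theorem hausdorffMeasure_image_of_edist_eq_of_sdiff {f : X → Y} {A S : Set X} {d : ℝ} (hd : 0 ≤ d)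
    (hS : MeasurableSet S) (hfS : MeasurableSet (f '' S)) (hinj : Set.InjOn f (A ∪ S))
    (hf_inter : ∀ x ∈ A ∩ S, ∀ y ∈ A ∩ S, edist (f x) (f y) = edist x y)
    (hf_sdiff : ∀ x ∈ A \ S, ∀ y ∈ A \ S, edist (f x) (f y) = edist x y) :
    μH[d] (f '' A) = μH[d] A := by
  have image_inter : f '' (A ∩ S) = f '' A ∩ f '' S :=
    hinj.image_inter Set.subset_union_left Set.subset_union_right
  have image_sdiff : f '' (A \ S) = f '' A \ f '' S := by
    rw [(hinj.mono Set.subset_union_left).image_sdiff, image_inter, Set.sdiff_self_inter]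
  rw [← measure_inter_add_sdiff (f '' A) hfS, ← image_inter, ← image_sdiff,
    hausdorffMeasure_image_of_edist_eq hd hf_inter, hausdorffMeasure_image_of_edist_eq hd hf_sdiff,
    measure_inter_add_sdiff A hS]

theorem hausdorffMeasure_image_lt_top_of_isBounded {E : Type*} [NormedAddCommGroup E]
    [NormedSpace ℝ E] [FiniteDimensional ℝ E] {g : E → X} {K : ℝ≥0} (hg : LipschitzWith K g)
    {B : Set E} (hB : Bornology.IsBounded B) : μH[(Module.finrank ℝ E : ℝ)] (g '' B) < ⊤ := by
  borelize E
  refine (hg.hausdorffMeasure_image_le (Nat.cast_nonneg _) B).trans_lt (ENNReal.mul_lt_top ?_ ?_)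
  · exact ENNReal.rpow_lt_top_of_nonneg (Nat.cast_nonneg _) ENNReal.coe_ne_top
  · exact hB.measure_lt_top

end HausdorffMeasure

theorem IsClosedRegion.closure_interior_eq {X : Type*} [TopologicalSpace X] {Ω : Set X}
    (hΩ : IsClosedRegion Ω) : closure (interior Ω) = Ω := by
  obtain ⟨V, hV, rfl⟩ := hΩ
  exact subset_antisymm (closure_minimal interior_subset isClosed_closure)
    (closure_mono (interior_maximal subset_closure hV))

theorem IsClosedRegion.isClosed {X : Type*} [TopologicalSpace X] {Ω : Set X}
    (hΩ : IsClosedRegion Ω) : IsClosed Ω :=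
  hΩ.closure_interior_eq ▸ isClosed_closure

/-- `f : X → Y` unrolls the angle `θ : Y → ℝ / Lℤ` to the height `h : X → ℝ`: it exhibits `X` as
the pullback of `ℝ → ℝ / Lℤ` along `θ`, and preserves distances between points whose heights
differ by at most half a period. -/
structure IsUnrolling {X Y : Type*} [EMetricSpace X] [EMetricSpace Y] {L : ℝ} (f : X → Y)
    (h : X → ℝ) (θ : Y → AddCircle L) : Prop where
  continuous_height : Continuous h
  angle_apply : ∀ x, θ (f x) = h x
  exists_lift : ∀ (y : Y) (s : ℝ), θ y = s → ∃ x, f x = y ∧ h x = s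
  edist_map : ∀ x₁ x₂, |h x₁ - h x₂| ≤ L / 2 → edist (f x₁) (f x₂) = edist x₁ x₂

/-- The set `Ω ⊆ Y`, cut along the angle `a` and unrolled into the slab of heights between `a` and
`a + L`. The interior of `Ω` is pulled back before taking the closure, so that the result is a
closed region. -/
def cutOpen {X Y : Type*} [TopologicalSpace X] [TopologicalSpace Y] (f : X → Y) (h : X → ℝ)
    (L a : ℝ) (Ω : Set Y) : Set X :=
  closure (f ⁻¹' interior Ω ∩ h ⁻¹' Set.Ioo a (a + L))

namespace IsUnrolling

variable {X Y : Type*} [EMetricSpace X] [EMetricSpace Y] {L : ℝ} {f : X → Y} {h : X → ℝ}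
  {θ : Y → AddCircle L}

theorem isOpen_slab (hf : IsUnrolling f h θ) (a b : ℝ) : IsOpen (h ⁻¹' Set.Ioo a b) :=
  isOpen_Ioo.preimage hf.continuous_height

theorem prodMap {Z : Type*} [EMetricSpace Z] (hf : IsUnrolling f h θ) :
    IsUnrolling (WithLp.map 2 (Prod.map (id : Z → Z) f)) (fun p => h p.snd)
      (fun p => θ p.snd) where
  continuous_height := hf.continuous_height.comp (by fun_prop)
  angle_apply p := hf.angle_apply p.snd
  exists_lift p s hs := by
    obtain ⟨x, hx, hxs⟩ := hf.exists_lift p.snd s hs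
    exact ⟨WithLp.toLp 2 (p.fst, x), congrArg (fun y => WithLp.toLp 2 (p.fst, y)) hx, hxs⟩
  edist_map p p' hp := by
    simp [WithLp.prod_edist_eq_add, WithLp.map, ← hf.edist_map p.snd p'.snd hp]

variable [hL : Fact (0 < L)]

theorem continuous (hf : IsUnrolling f h θ) : Continuous f := by
  refine continuous_iff_continuousAt.2 fun x => EMetric.tendsto_nhds.2 fun ε hε => ?_
  have height_near : ∀ᶠ y in nhds x, dist (h y) (h x) < L / 2 :=
    Metric.tendsto_nhds.1 (hf.continuous_height.tendsto x) _ (half_pos hL.out)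
  filter_upwards [height_near, Metric.eball_mem_nhds x hε] with y hy hyε
  rwa [hf.edist_map y x hy.le]

theorem exists_lift_near (hf : IsUnrolling f h θ) (x : X) (y : Y) :
    ∃ x', f x' = y ∧ |h x - h x'| ≤ L / 2 := by
  obtain ⟨s, hs, hsy⟩ : θ y ∈ ((↑) : ℝ → AddCircle L) ''
      Set.Icc (h x - L / 2) (h x - L / 2 + L) := by
    rw [AddCircle.coe_image_Icc_eq]
    trivial
  obtain ⟨x', hx', rfl⟩ := hf.exists_lift y s hsy.symm
  exact ⟨x', hx', abs_le.2 ⟨by linarith [hs.2], by linarith [hs.1]⟩⟩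

theorem isOpenMap (hf : IsUnrolling f h θ) : IsOpenMap f := by
  intro U hU
  refine EMetric.isOpen_iff.2 ?_
  rintro _ ⟨x, hx, rfl⟩
  obtain ⟨ε, hε, hεU⟩ := EMetric.isOpen_iff.1 hU x hx
  refine ⟨ε, hε, fun y hy => ?_⟩
  obtain ⟨x', rfl, hx'⟩ := hf.exists_lift_near x y
  refine ⟨x', hεU ?_, rfl⟩
  rwa [Metric.mem_eball', ← hf.edist_map x x' hx', ← Metric.mem_eball']

theorem injOn_slab (hf : IsUnrolling f h θ) (a : ℝ) :
    Set.InjOn f (h ⁻¹' Set.Ioo a (a + L)) := by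
  intro x hx x' hx' hxx'
  have height_eq : h x = h x' := by
    rw [← AddCircle.coe_eq_coe_iff_of_mem_Ico (Set.Ioo_subset_Ico_self hx)
      (Set.Ioo_subset_Ico_self hx'), ← hf.angle_apply, ← hf.angle_apply, hxx']
  rw [← edist_eq_zero, ← hf.edist_map x x' (by simpa [height_eq] using (half_pos hL.out).le),
    hxx', edist_self]

theorem image_slab (hf : IsUnrolling f h θ) (a : ℝ) :
    f '' (h ⁻¹' Set.Ioo a (a + L)) = (θ ⁻¹' {(a : AddCircle L)})ᶜ := by
  ext y
  constructor
  · rintro ⟨x, hx, rfl⟩ hxa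
    refine hx.1.ne' ((AddCircle.coe_eq_coe_iff_of_mem_Ico (p := L) (Set.Ioo_subset_Ico_self hx)
      ⟨le_rfl, lt_add_of_pos_right a hL.out⟩).1 ?_)
    rw [← hf.angle_apply]
    exact hxa
  · intro hya
    obtain ⟨s, hs, hsy⟩ : θ y ∈ ((↑) : ℝ → AddCircle L) '' Set.Ico a (a + L) := by
      rw [AddCircle.coe_image_Ico_eq]
      trivial
    obtain ⟨x, rfl, rfl⟩ := hf.exists_lift y s hsy.symm
    refine ⟨x, ⟨hs.1.lt_of_ne fun hxa => hya ?_, hs.2⟩, rfl⟩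
    rw [Set.mem_preimage, ← hsy, hxa, Set.mem_singleton_iff]

theorem isClosedRegion_cutOpen (hf : IsUnrolling f h θ) (a : ℝ) (Ω : Set Y) :
    IsClosedRegion (cutOpen f h L a Ω) :=
  ⟨_, (isOpen_interior.preimage hf.continuous).inter (hf.isOpen_slab a _), rfl⟩

theorem cutOpen_subset (hf : IsUnrolling f h θ) (a : ℝ) {Ω : Set Y} (hΩ : IsClosed Ω) :
    cutOpen f h L a Ω ⊆ f ⁻¹' Ω ∩ h ⁻¹' Set.Icc a (a + L) :=
  closure_minimal (Set.inter_subset_inter (Set.preimage_mono interior_subset)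
      (Set.preimage_mono Set.Ioo_subset_Icc_self))
    ((hΩ.preimage hf.continuous).inter (isClosed_Icc.preimage hf.continuous_height))

theorem cutOpen_inter_slab (hf : IsUnrolling f h θ) (a : ℝ) {Ω : Set Y} (hΩ : IsClosedRegion Ω) :
    cutOpen f h L a Ω ∩ h ⁻¹' Set.Ioo a (a + L) = f ⁻¹' Ω ∩ h ⁻¹' Set.Ioo a (a + L) := by
  refine subset_antisymm (Set.inter_subset_inter_left _
    ((hf.cutOpen_subset a hΩ.isClosed).trans Set.inter_subset_left)) ?_
  refine Set.subset_inter ?_ Set.inter_subset_right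
  calc f ⁻¹' Ω ∩ h ⁻¹' Set.Ioo a (a + L)
      = closure (f ⁻¹' interior Ω) ∩ h ⁻¹' Set.Ioo a (a + L) := by
        rw [← hf.isOpenMap.preimage_closure_eq_closure_preimage hf.continuous,
          hΩ.closure_interior_eq]
    _ ⊆ cutOpen f h L a Ω := (hf.isOpen_slab a _).closure_inter

theorem frontier_cutOpen_inter_slab (hf : IsUnrolling f h θ) (a : ℝ) {Ω : Set Y}
    (hΩ : IsClosedRegion Ω) :
    frontier (cutOpen f h L a Ω) ∩ h ⁻¹' Set.Ioo a (a + L) =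
      f ⁻¹' frontier Ω ∩ h ⁻¹' Set.Ioo a (a + L) := by
  rw [← frontier_inter_open_inter (hf.isOpen_slab a _), hf.cutOpen_inter_slab a hΩ,
    frontier_inter_open_inter (hf.isOpen_slab a _),
    hf.isOpenMap.preimage_frontier_eq_frontier_preimage hf.continuous]

theorem cutOpen_sdiff_slab_subset (hf : IsUnrolling f h θ) (a : ℝ) {Ω : Set Y}
    (hΩ : IsClosed Ω) :
    cutOpen f h L a Ω \ h ⁻¹' Set.Ioo a (a + L) ⊆
      (f ⁻¹' (Ω ∩ θ ⁻¹' {(a : AddCircle L)}) ∩ h ⁻¹' {a}) ∪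
      (f ⁻¹' (Ω ∩ θ ⁻¹' {(a : AddCircle L)}) ∩ h ⁻¹' {a + L}) := by
  rintro x ⟨hx, hxslab⟩
  obtain ⟨hxΩ, hxa, hxL⟩ := hf.cutOpen_subset a hΩ hx
  have hx_end : h x = a ∨ h x = a + L := by
    by_contra! hne
    exact hxslab ⟨hxa.lt_of_ne' hne.1, hxL.lt_of_ne hne.2⟩
  refine hx_end.imp (fun hxa => ⟨⟨hxΩ, ?_⟩, hxa⟩) (fun hxL => ⟨⟨hxΩ, ?_⟩, hxL⟩)
  · rw [Set.mem_preimage, hf.angle_apply, hxa, Set.mem_singleton_iff]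
  · rw [Set.mem_preimage, hf.angle_apply, hxL, AddCircle.coe_add_period, Set.mem_singleton_iff]

section Measure

variable [MeasurableSpace X] [BorelSpace X] [MeasurableSpace Y] [BorelSpace Y] {d : ℝ}

theorem hausdorffMeasure_preimage_inter_slab (hf : IsUnrolling f h θ) (a : ℝ) (B : Set Y)
    (hd : 0 ≤ d) :
    μH[d] (f ⁻¹' B ∩ h ⁻¹' Set.Ioo a (a + L)) = μH[d] (B \ θ ⁻¹' {(a : AddCircle L)}) := by
  have hL0 : 0 < L := hL.out
  have upper_open := hf.isOpen_slab (a + L / 2) (a + L)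
  have upper_subset : h ⁻¹' Set.Ioo (a + L / 2) (a + L) ⊆ h ⁻¹' Set.Ioo a (a + L) :=
    Set.preimage_mono (Set.Ioo_subset_Ioo_left (by linarith))
  rw [Set.sdiff_eq, ← hf.image_slab a, ← Set.image_preimage_inter]
  refine (hausdorffMeasure_image_of_edist_eq_of_sdiff hd upper_open.measurableSet
    (hf.isOpenMap _ upper_open).measurableSet
    ((hf.injOn_slab a).mono (Set.union_subset Set.inter_subset_right upper_subset)) ?_ ?_).symm
  · rintro x ⟨-, hx⟩ x' ⟨-, hx'⟩
    exact hf.edist_map x x' (abs_le.2 ⟨by linarith [hx.1, hx'.2], by linarith [hx.2, hx'.1]⟩)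
  · have height_mem : ∀ x ∈ (f ⁻¹' B ∩ h ⁻¹' Set.Ioo a (a + L)) \
        h ⁻¹' Set.Ioo (a + L / 2) (a + L), h x ∈ Set.Ioc a (a + L / 2) :=
      fun x hx => ⟨hx.1.2.1, not_lt.1 fun hlt => hx.2 ⟨hlt, hx.1.2.2⟩⟩
    intro x hx x' hx'
    obtain ⟨hxa, hxL⟩ := height_mem x hx
    obtain ⟨hxa', hxL'⟩ := height_mem x' hx'
    exact hf.edist_map x x' (abs_le.2 ⟨by linarith, by linarith⟩)

theorem hausdorffMeasure_preimage_inter_level_le (hf : IsUnrolling f h θ) (s : ℝ) (B : Set Y)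
    (hd : 0 ≤ d) : μH[d] (f ⁻¹' B ∩ h ⁻¹' {s}) ≤ μH[d] B := by
  rw [← hausdorffMeasure_image_of_edist_eq (f := f) hd]
  · exact measure_mono (Set.image_subset_iff.2 Set.inter_subset_left)
  · rintro x ⟨-, hx : h x = s⟩ x' ⟨-, hx' : h x' = s⟩
    exact hf.edist_map x x' (by simpa [hx, hx'] using (half_pos hL.out).le)

theorem hausdorffMeasure_cutOpen_sdiff_slab_le (hf : IsUnrolling f h θ) (a : ℝ) {Ω : Set Y}
    (hΩ : IsClosed Ω) (hd : 0 ≤ d) :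
    μH[d] (cutOpen f h L a Ω \ h ⁻¹' Set.Ioo a (a + L)) ≤
      2 * μH[d] (Ω ∩ θ ⁻¹' {(a : AddCircle L)}) := by
  refine (measure_mono (hf.cutOpen_sdiff_slab_subset a hΩ)).trans ?_
  rw [two_mul]
  exact (measure_union_le _ _).trans (add_le_add
    (hf.hausdorffMeasure_preimage_inter_level_le _ _ hd)
    (hf.hausdorffMeasure_preimage_inter_level_le _ _ hd))

theorem hausdorffMeasure_cutOpen (hf : IsUnrolling f h θ) (a : ℝ) {Ω : Set Y}
    (hΩ : IsClosedRegion Ω) (hd : 0 ≤ d) (hcut : μH[d] (Ω ∩ θ ⁻¹' {(a : AddCircle L)}) = 0) :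
    μH[d] (cutOpen f h L a Ω) = μH[d] Ω := by
  have ends_null : μH[d] (cutOpen f h L a Ω \ h ⁻¹' Set.Ioo a (a + L)) = 0 := by
    simpa [hcut] using hf.hausdorffMeasure_cutOpen_sdiff_slab_le a hΩ.isClosed hd
  calc μH[d] (cutOpen f h L a Ω)
      = μH[d] (cutOpen f h L a Ω ∩ h ⁻¹' Set.Ioo a (a + L)) := by
        rw [← measure_inter_add_sdiff _ (hf.isOpen_slab a (a + L)).measurableSet, ends_null,
          add_zero]
    _ = μH[d] (Ω \ θ ⁻¹' {(a : AddCircle L)}) := by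
        rw [hf.cutOpen_inter_slab a hΩ, hf.hausdorffMeasure_preimage_inter_slab a Ω hd]
    _ = μH[d] Ω := by rw [← Set.sdiff_self_inter, measure_sdiff_null hcut]

theorem hausdorffMeasure_frontier_cutOpen_le (hf : IsUnrolling f h θ) (a : ℝ) {Ω : Set Y}
    (hΩ : IsClosedRegion Ω) (hd : 0 ≤ d) :
    μH[d] (frontier (cutOpen f h L a Ω)) ≤
      μH[d] (frontier Ω) + 2 * μH[d] (Ω ∩ θ ⁻¹' {(a : AddCircle L)}) := by
  rw [← measure_inter_add_sdiff _ (hf.isOpen_slab a (a + L)).measurableSet,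
    hf.frontier_cutOpen_inter_slab a hΩ, hf.hausdorffMeasure_preimage_inter_slab a _ hd]
  refine add_le_add (measure_mono Set.sdiff_subset) ?_
  have frontier_subset : frontier (cutOpen f h L a Ω) ⊆ cutOpen f h L a Ω :=
    isClosed_closure.frontier_subset
  exact (measure_mono (Set.sdiff_subset_sdiff_left frontier_subset)).trans
    (hf.hausdorffMeasure_cutOpen_sdiff_slab_le a hΩ.isClosed hd)

end Measure

theorem exists_isClosedRegion_haus_eq (hf : IsUnrolling f h θ) {Ω : Set Y}
    (hΩ : IsClosedRegion Ω) {m : ℕ} {t : AddCircle L} (hcut : haus Y m (Ω ∩ θ ⁻¹' {t}) ≠ ⊤) :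
    ∃ U : Set X, IsClosedRegion U ∧ haus X (m + 1) U = haus Y (m + 1) Ω ∧
      haus X m (frontier U) ≤ haus Y m (frontier Ω) + 2 * haus Y m (Ω ∩ θ ⁻¹' {t}) := by
  borelize X Y
  simp only [haus_eq_hausdorffMeasure] at hcut ⊢
  obtain ⟨a, rfl⟩ := QuotientAddGroup.mk_surjective t
  have cut_null : μH[((m + 1 : ℕ) : ℝ)] (Ω ∩ θ ⁻¹' {(a : AddCircle L)}) = 0 :=
    (Measure.hausdorffMeasure_zero_or_top (by simp) _).resolve_right hcut
  exact ⟨cutOpen f h L a Ω, hf.isClosedRegion_cutOpen a Ω,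
    hf.hausdorffMeasure_cutOpen a hΩ (Nat.cast_nonneg _) cut_null,
    hf.hausdorffMeasure_frontier_cutOpen_le a hΩ (Nat.cast_nonneg _)⟩

end IsUnrolling

/-- The unrolling `ℝⁿ⁺¹ → S¹_r × ℝⁿ` of the circle, which wraps the first coordinate. -/
def circleWrap (r : ℝ) (n : ℕ) (x : EucSp (n + 1)) : S1R r n :=
  WithLp.toLp 2 ((x 0 : Circ r), WithLp.toLp 2 fun j => x j.succ)

theorem dist_circleWrap {r : ℝ} (hr : 0 < r) {n : ℕ} {x x' : EucSp (n + 1)}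
    (hx : |x 0 - x' 0| ≤ 2 * Real.pi * r / 2) :
    dist (circleWrap r n x) (circleWrap r n x') = dist x x' := by
  have hL : 0 < 2 * Real.pi * r := by positivity
  have dist_angle : dist (x 0 : Circ r) (x' 0 : Circ r) = dist (x 0) (x' 0) := by
    rw [dist_eq_norm, ← AddCircle.coe_sub, Real.dist_eq, AddCircle.norm_coe_eq_abs_iff _ hL.ne',
      abs_of_pos hL]
    exact hx
  simp only [circleWrap, WithLp.prod_dist_eq_of_L2, EuclideanSpace.dist_eq, WithLp.toLp_fst,
    WithLp.toLp_snd, dist_angle, Fin.sum_univ_succ]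
  rw [Real.sq_sqrt (by positivity)]

theorem isUnrolling_circleWrap {r : ℝ} (hr : 0 < r) (n : ℕ) :
    IsUnrolling (circleWrap r n) (fun x => x 0) WithLp.fst where
  continuous_height := by fun_prop
  angle_apply _ := rfl
  exists_lift y s hs :=
    ⟨WithLp.toLp 2 (Fin.cons s y.snd), congrArg (fun u => WithLp.toLp 2 (u, y.snd)) hs.symm, rfl⟩
  edist_map x x' hx := by rw [edist_dist, edist_dist, dist_circleWrap hr hx]

/-- The unrolling `T² × ℝⁿ⁺¹ → T³ × ℝⁿ` of the third circle. -/
def torusWrap (r1 r2 r3 : ℝ) (n : ℕ) : T2R r1 r2 (n + 1) → T3R r1 r2 r3 n :=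
  WithLp.map 2 (Prod.map id (WithLp.map 2 (Prod.map id (circleWrap r3 n))))

theorem isUnrolling_torusWrap (r1 r2 : ℝ) {r3 : ℝ} (hr3 : 0 < r3) (n : ℕ) :
    IsUnrolling (torusWrap r1 r2 r3 n) (fun p => t2euc p 0) t3trd :=
  (isUnrolling_circleWrap hr3 n).prodMap.prodMap

section SublevelSets

theorem continuous_measure_Iic {ν : Measure ℝ} [NullSingletonClass ν]
    (hν : ∀ R, ν (Set.Iic R) ≠ ⊤) : Continuous fun R => ν (Set.Iic R) := by
  have integrableOn_one (R : ℝ) : IntegrableOn (fun _ => (1 : ℝ)) (Set.Iic R) ν :=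
    integrableOn_const (hν R)
  have real_eq (R : ℝ) :
      ν.real (Set.Iic R) = ν.real (Set.Iic 0) + ∫ _ in (0 : ℝ)..R, (1 : ℝ) ∂ν := by
    rw [← intervalIntegral.integral_Iic_sub_Iic (integrableOn_one 0) (integrableOn_one R)]
    simp
  have continuous_real : Continuous fun R => ν.real (Set.Iic R) := by
    rw [funext real_eq]
    exact continuous_const.add (intervalIntegral.continuous_primitive (fun a b =>
      ⟨(integrableOn_one b).mono_set Set.Ioc_subset_Iic_self,
        (integrableOn_one a).mono_set Set.Ioc_subset_Iic_self⟩) 0)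
  simpa only [Function.comp_def, ofReal_measureReal (hν _)] using
    ENNReal.continuous_ofReal.comp continuous_real

theorem exists_measure_Iic_eq {ν : Measure ℝ} [NullSingletonClass ν]
    (hν : ∀ R, ν (Set.Iic R) ≠ ⊤) {v : ℝ≥0∞} (hv0 : 0 < v) (hv : v < ν Set.univ) :
    ∃ R, ν (Set.Iic R) = v := by
  have tendsto_bot : Filter.Tendsto (fun R => ν (Set.Iic R)) Filter.atBot (nhds 0) := by
    have := tendsto_measure_iInter_atBot (μ := ν) (s := Set.Iic)
      (fun R => measurableSet_Iic.nullMeasurableSet) (fun _ _ => Set.Iic_subset_Iic.2) ⟨0, hν 0⟩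
    rwa [iInter_Iic_eq_empty_iff.2 (by simp [not_bddBelow_univ]), measure_empty] at this
  obtain ⟨R₀, hR₀⟩ := (tendsto_bot.eventually_lt_const hv0).exists
  obtain ⟨R₁, hR₁⟩ := ((tendsto_measure_Iic_atTop ν).eventually_const_lt hv).exists
  exact mem_range_of_exists_le_of_exists_ge (continuous_measure_Iic hν) ⟨R₀, hR₀.le⟩ ⟨R₁, hR₁.le⟩

theorem exists_measure_preimage_Iic_eq {X : Type*} [MeasurableSpace X] {μ : Measure X} {q : X → ℝ}
    (hq : Measurable q) (hlevel : ∀ R, μ (q ⁻¹' {R}) = 0) (hsub : ∀ R, μ (q ⁻¹' Set.Iic R) ≠ ⊤)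
    {v : ℝ≥0∞} (hv0 : 0 < v) (hv : v < μ Set.univ) : ∃ R, μ (q ⁻¹' Set.Iic R) = v := by
  have map_Iic (R : ℝ) : μ.map q (Set.Iic R) = μ (q ⁻¹' Set.Iic R) :=
    Measure.map_apply hq measurableSet_Iic
  have : NullSingletonClass (μ.map q) :=
    ⟨fun R => by rw [Measure.map_apply hq (measurableSet_singleton R), hlevel]⟩
  obtain ⟨R, hR⟩ := exists_measure_Iic_eq (ν := μ.map q) (fun R => map_Iic R ▸ hsub R) hv0
    (by rwa [Measure.map_apply hq MeasurableSet.univ, Set.preimage_univ])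
  exact ⟨R, map_Iic R ▸ hR⟩

theorem frontier_closure_preimage_Iio_subset {X α : Type*} [TopologicalSpace X] [LinearOrder α]
    [TopologicalSpace α] [OrderClosedTopology α] {q : X → α} (hq : Continuous q) (R : α) :
    frontier (closure (q ⁻¹' Set.Iio R)) ⊆ q ⁻¹' {R} :=
  frontier_closure_subset.trans (frontier_lt_subset_eq hq continuous_const)

theorem isoProfile_lt_top_of_exhaustion {X : Type*} [EMetricSpace X] {m : ℕ} {q : X → ℝ}
    (hq : Continuous q) (hlevel : ∀ R, haus X m (q ⁻¹' {R}) ≠ ⊤)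
    (hsub : ∀ R, haus X (m + 1) (q ⁻¹' Set.Iic R) ≠ ⊤) {v : ℝ≥0∞}
    (hv : v ≤ haus X (m + 1) Set.univ) : isoProfile X (m + 1) v < ⊤ := by
  suffices ∃ U : Set X, IsClosedRegion U ∧ haus X (m + 1) U = v ∧ haus X m (frontier U) < ⊤ by
    obtain ⟨U, hU, hUv, hfr⟩ := this
    exact (iInf₂_le U ⟨hU, hUv⟩).trans_lt hfr
  borelize X
  simp only [haus_eq_hausdorffMeasure] at hlevel hsub hv ⊢
  rcases eq_zero_or_pos v with rfl | hv0
  · exact ⟨∅, ⟨∅, isOpen_empty, closure_empty.symm⟩, by simp, by simp⟩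
  rcases hv.eq_or_lt with rfl | hv
  · exact ⟨Set.univ, ⟨Set.univ, isOpen_univ, closure_univ.symm⟩, rfl, by simp⟩
  have level_null (R : ℝ) : μH[((m + 1 : ℕ) : ℝ)] (q ⁻¹' {R}) = 0 :=
    (Measure.hausdorffMeasure_zero_or_top (by simp) _).resolve_right (hlevel R)
  obtain ⟨R, hR⟩ := exists_measure_preimage_Iic_eq hq.measurable level_null hsub hv0 hv
  refine ⟨closure (q ⁻¹' Set.Iio R), ⟨_, isOpen_Iio.preimage hq, rfl⟩, ?_,
    (measure_mono (frontier_closure_preimage_Iio_subset hq R)).trans_lt (hlevel R).lt_top⟩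
  refine hR ▸ measure_congr (Filter.EventuallyLE.antisymm ?_ ?_)
  · exact (closure_lt_subset_le hq continuous_const).eventuallyLE
  · have : q ⁻¹' Set.Iic R \ closure (q ⁻¹' Set.Iio R) ⊆ q ⁻¹' {R} := fun x hx =>
      le_antisymm hx.1 (not_lt.1 fun hlt => hx.2 (subset_closure hlt))
    exact ae_le_set.2 (measure_mono_null this (level_null R))

end SublevelSets

section TorusFiniteMeasure

/-- The parametrization of `T² × ℝᵐ` by the universal cover. -/
def t2Param (r1 r2 : ℝ) (m : ℕ) (p : ℝ × ℝ × EucSp m) : T2R r1 r2 m :=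
  WithLp.toLp 2 ((p.1 : Circ r1), WithLp.toLp 2 ((p.2.1 : Circ r2), p.2.2))

theorem lipschitzWith_addCircle_coe (L : ℝ) : LipschitzWith 1 ((↑) : ℝ → AddCircle L) :=
  LipschitzWith.of_dist_le_mul fun x y => by
    rw [NNReal.coe_one, one_mul, dist_eq_norm, dist_eq_norm, ← AddCircle.coe_sub]
    exact QuotientAddGroup.norm_mk_le_norm

theorem exists_lipschitzWith_t2Param (r1 r2 : ℝ) (m : ℕ) :
    ∃ K, LipschitzWith K (t2Param r1 r2 m) := by
  have angle₁ := (lipschitzWith_addCircle_coe (2 * Real.pi * r1)).comp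
    (LipschitzWith.prod_fst (α := ℝ) (β := ℝ × EucSp m))
  have angle₂ := (lipschitzWith_addCircle_coe (2 * Real.pi * r2)).comp
    (LipschitzWith.prod_fst (α := ℝ) (β := EucSp m))
  have tail := ((WithLp.prod_lipschitzWith_toLp 2 (Circ r2) (EucSp m)).comp
    (angle₂.prodMk LipschitzWith.prod_snd)).comp (LipschitzWith.prod_snd (α := ℝ))
  exact ⟨_, (WithLp.prod_lipschitzWith_toLp 2 (Circ r1) (S1R r2 m)).comp (angle₁.prodMk tail)⟩

theorem preimage_t2euc_subset_image_t2Param {r1 r2 : ℝ} (hr1 : 0 < r1) (hr2 : 0 < r2) {m : ℕ}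
    (C : Set (EucSp m)) :
    t2euc ⁻¹' C ⊆ t2Param r1 r2 m ''
      (Set.Icc 0 (2 * Real.pi * r1) ×ˢ Set.Icc 0 (2 * Real.pi * r2) ×ˢ C) := by
  have : Fact (0 < 2 * Real.pi * r1) := ⟨by positivity⟩
  have : Fact (0 < 2 * Real.pi * r2) := ⟨by positivity⟩
  intro p hp
  obtain ⟨s, hs, hsp⟩ := AddCircle.eq_coe_Ico (t2fst p)
  obtain ⟨t, ht, htp⟩ := AddCircle.eq_coe_Ico (t2snd p)
  refine ⟨(s, t, t2euc p), ⟨Set.Ico_subset_Icc_self hs, Set.Ico_subset_Icc_self ht, hp⟩, ?_⟩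
  rw [t2Param, hsp, htp]
  rfl

theorem haus_preimage_t2euc_image_lt_top {r1 r2 : ℝ} (hr1 : 0 < r1) (hr2 : 0 < r2) {m : ℕ}
    {E : Type*} [NormedAddCommGroup E] [NormedSpace ℝ E] [FiniteDimensional ℝ E]
    {w : E → EucSp m} {K : ℝ≥0} (hw : LipschitzWith K w) {B : Set E} (hB : Bornology.IsBounded B) :
    haus (T2R r1 r2 m) (Module.finrank ℝ E + 2) (t2euc ⁻¹' (w '' B)) < ⊤ := by
  borelize (T2R r1 r2 m)
  obtain ⟨K', hK'⟩ := exists_lipschitzWith_t2Param r1 r2 m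
  have hprod : LipschitzWith _ (Prod.map id (Prod.map id w) : ℝ × ℝ × E → ℝ × ℝ × EucSp m) :=
    LipschitzWith.prod_fst.prodMk ((LipschitzWith.prod_fst.comp LipschitzWith.prod_snd).prodMk
      (hw.comp (LipschitzWith.prod_snd.comp LipschitzWith.prod_snd)))
  have finrank_eq : Module.finrank ℝ (ℝ × ℝ × E) = Module.finrank ℝ E + 2 := by
    simp only [Module.finrank_prod, Module.finrank_self]
    ring
  rw [haus_eq_hausdorffMeasure, ← finrank_eq]
  refine (measure_mono ?_).trans_lt (hausdorffMeasure_image_lt_top_of_isBounded (hK'.comp hprod)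
    ((Metric.isBounded_Icc 0 (2 * Real.pi * r1)).prod
      ((Metric.isBounded_Icc 0 (2 * Real.pi * r2)).prod hB)))
  rw [Set.image_comp, Set.prodMap_image_prod, Set.prodMap_image_prod, Set.image_id, Set.image_id]
  exact preimage_t2euc_subset_image_t2Param hr1 hr2 _

/-- The `ℓ^∞` norm of the Euclidean coordinates. It exhausts `T² × ℝᵐ` by the `T² × [-R, R]ᵐ`,
whose boundaries are flat and so visibly have finite measure. -/
def t2supNorm {r1 r2 : ℝ} {m : ℕ} (p : T2R r1 r2 m) : ℝ :=
  ‖WithLp.ofLp (t2euc p)‖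

theorem continuous_t2supNorm {r1 r2 : ℝ} {m : ℕ} :
    Continuous (t2supNorm : T2R r1 r2 m → ℝ) := by
  unfold t2supNorm t2euc
  fun_prop

theorem exists_norm_apply_eq_norm {ι : Type*} [Fintype ι] [Nonempty ι] {G : ι → Type*}
    [∀ i, SeminormedAddGroup (G i)] (x : ∀ i, G i) : ∃ i, ‖x i‖ = ‖x‖ := by
  obtain ⟨i, hi⟩ := Finite.exists_max fun i => ‖x i‖
  exact ⟨i, le_antisymm (norm_le_pi_norm x i) ((pi_norm_le_iff_of_nonneg (norm_nonneg _)).2 hi)⟩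

theorem lipschitzWith_insertNth {n : ℕ} {α : Fin (n + 1) → Type*} [∀ j, PseudoMetricSpace (α j)]
    (i : Fin (n + 1)) (s : α i) : LipschitzWith 1 (i.insertNth s : (∀ j, α (i.succAbove j)) → _) :=
  LipschitzWith.of_dist_le_mul fun z z' => by simp [Fin.dist_insertNth_insertNth]

theorem sphere_subset_iUnion_image_insertNth (n : ℕ) (R : ℝ) :
    Metric.sphere (0 : Fin (n + 1) → ℝ) R ⊆ ⋃ i : Fin (n + 1), ⋃ s ∈ ({R, -R} : Set ℝ),
      i.insertNth (α := fun _ => ℝ) s '' Metric.closedBall (0 : Fin n → ℝ) R := by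
  intro x hx
  have norm_x : ‖x‖ = R := mem_sphere_zero_iff_norm.1 hx
  obtain ⟨i, hi⟩ := exists_norm_apply_eq_norm x
  have x_i : x i ∈ ({R, -R} : Set ℝ) := eq_or_eq_neg_of_abs_eq (hi.trans norm_x)
  simp only [Set.mem_iUnion]
  refine ⟨i, x i, x_i, i.removeNth x, ?_, Fin.insertNth_self_removeNth i x⟩
  rw [mem_closedBall_zero_iff, ← norm_x]
  exact (pi_norm_le_iff_of_nonneg (norm_nonneg x)).2 fun j => norm_le_pi_norm x _

theorem haus_t2supNorm_preimage_Iic_lt_top {r1 r2 : ℝ} (hr1 : 0 < r1) (hr2 : 0 < r2) (m : ℕ)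
    (R : ℝ) : haus (T2R r1 r2 m) (m + 2) (t2supNorm ⁻¹' Set.Iic R) < ⊤ := by
  have finite_ball := haus_preimage_t2euc_image_lt_top hr1 hr2
    (PiLp.lipschitzWith_toLp 2 fun _ : Fin m => ℝ) (Metric.isBounded_closedBall (x := 0) (r := R))
  rw [Module.finrank_fin_fun] at finite_ball
  refine (measure_mono fun p hp => ?_).trans_lt finite_ball
  exact ⟨WithLp.ofLp (t2euc p), mem_closedBall_zero_iff.2 hp, rfl⟩

theorem haus_t2supNorm_level_lt_top {r1 r2 : ℝ} (hr1 : 0 < r1) (hr2 : 0 < r2) (n : ℕ) (R : ℝ) :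
    haus (T2R r1 r2 (n + 1)) (n + 2) (t2supNorm ⁻¹' {R}) < ⊤ := by
  borelize (T2R r1 r2 (n + 1))
  have finite_face (i : Fin (n + 1)) (s : ℝ) := haus_preimage_t2euc_image_lt_top hr1 hr2
    ((PiLp.lipschitzWith_toLp 2 fun _ : Fin (n + 1) => ℝ).comp (lipschitzWith_insertNth i s))
    (Metric.isBounded_closedBall (x := 0) (r := R))
  rw [haus_eq_hausdorffMeasure]
  simp only [Module.finrank_fin_fun, haus_eq_hausdorffMeasure] at finite_face
  refine (measure_mono fun p hp => ?_).trans_lt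
    (measure_biUnion_lt_top (Set.finite_univ.prod (Set.toFinite {R, -R}))
      fun q _ => finite_face q.1 q.2)
  obtain ⟨i, s, hs, z, hz, hzp⟩ : ∃ i : Fin (n + 1), ∃ s ∈ ({R, -R} : Set ℝ),
      WithLp.ofLp (t2euc p) ∈ i.insertNth (α := fun _ => ℝ) s '' Metric.closedBall 0 R := by
    simpa only [Set.mem_iUnion, exists_prop] using
      sphere_subset_iUnion_image_insertNth n R (mem_sphere_zero_iff_norm.2 hp)
  exact Set.mem_biUnion (x := (i, s)) ⟨Set.mem_univ i, hs⟩ ⟨z, hz, congrArg (WithLp.toLp 2) hzp⟩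

end TorusFiniteMeasure

theorem isoProfile_haus_lt_top {r1 r2 : ℝ} (hr1 : 0 < r1) (hr2 : 0 < r2) (n : ℕ)
    (U : Set (T2R r1 r2 (n + 1))) :
    isoProfile (T2R r1 r2 (n + 1)) (n + 3) (haus (T2R r1 r2 (n + 1)) (n + 3) U) < ⊤ :=
  isoProfile_lt_top_of_exhaustion continuous_t2supNorm
    (fun R => (haus_t2supNorm_level_lt_top hr1 hr2 n R).ne)
    (fun R => (haus_t2supNorm_preimage_Iic_lt_top hr1 hr2 (n + 1) R).ne)
    (measure_mono (Set.subset_univ U))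

theorem t3_profile_lower_bound_general {r1 r2 r3 : ℝ} (hr1 : 0 < r1) (hr2 : 0 < r2) (hr3 : 0 < r3)
    (n : ℕ) (c : ℝ) {Ω : Set (T3R r1 r2 r3 n)} (hΩ : IsClosedRegion Ω)
    (hη : etaMin Ω < ENNReal.ofReal c) :
    isoProfile (T2R r1 r2 (n + 1)) (n + 3) (haus (T3R r1 r2 r3 n) (n + 3) Ω)
      < haus (T3R r1 r2 r3 n) (n + 2) (frontier Ω) + ENNReal.ofReal (2 * c) := by
  have : Fact (0 < 2 * Real.pi * r3) := ⟨by positivity⟩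
  obtain ⟨t, ht⟩ := iInf_lt_iff.1 hη
  obtain ⟨U, hU, hvol, harea⟩ := (isUnrolling_torusWrap r1 r2 hr3 n).exists_isClosedRegion_haus_eq
    hΩ (ht.trans ENNReal.ofReal_lt_top).ne
  rcases eq_or_ne (haus (T3R r1 r2 r3 n) (n + 2) (frontier Ω)) ⊤ with htop | hfin
  · rw [htop, top_add, ← hvol]
    exact isoProfile_haus_lt_top hr1 hr2 n U
  · calc isoProfile (T2R r1 r2 (n + 1)) (n + 3) (haus (T3R r1 r2 r3 n) (n + 3) Ω)
        ≤ haus (T2R r1 r2 (n + 1)) (n + 2) (frontier U) := iInf₂_le U ⟨hU, hvol⟩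
      _ ≤ haus (T3R r1 r2 r3 n) (n + 2) (frontier Ω) + 2 * sliceF3 Ω t := harea
      _ < haus (T3R r1 r2 r3 n) (n + 2) (frontier Ω) + 2 * ENNReal.ofReal c := by
        gcongr
        exact ENNReal.ofNat_ne_top
      _ = haus (T3R r1 r2 r3 n) (n + 2) (frontier Ω) + ENNReal.ofReal (2 * c) := by
        rw [ENNReal.ofReal_mul zero_le_two, ENNReal.ofReal_ofNat]

/-- Lemma 11 of the paper.
Let `0 < r1 ≤ r2 ≤ r3`, `2 ≤ n ≤ 4`, let `c > 0`, and let `Ω` be an isoperimetric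
region in `T³ × ℝⁿ` with `0 < η_m < c`.  Then
`I_{S¹_{r1}×S¹_{r2}×ℝ^{n+1}}(V^{n+3}(Ω)) − 2c < V^{n+2}(∂Ω)`
(stated with the subtraction moved to the right-hand side). -/
theorem t3_profile_lower_bound (r1 r2 r3 : ℝ) (hr1 : 0 < r1) (hr12 : r1 ≤ r2)
    (hr23 : r2 ≤ r3) (n : ℕ) (hn2 : 2 ≤ n) (hn4 : n ≤ 4)
    (c : ℝ) (hc : 0 < c)
    (Ω : Set (T3R r1 r2 r3 n)) (hΩ : IsIsoRegion (T3R r1 r2 r3 n) (n+3) Ω)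
    (h1 : 0 < etaMin Ω) (h2 : etaMin Ω < ENNReal.ofReal c) :
    isoProfile (T2R r1 r2 (n+1)) (n+3) (haus (T3R r1 r2 r3 n) (n+3) Ω)
      < haus (T3R r1 r2 r3 n) (n+2) (frontier Ω) + ENNReal.ofReal (2 * c) :=
  t3_profile_lower_bound_general hr1 (hr1.trans_le hr12) (hr1.trans_le (hr12.trans hr23)) n c
    hΩ.1 h2

end
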